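/- Let M = N and let U₁,…,U_N be as in the context (all of block-diagonal form diag(Ũ_k, I_{n−m})). Then for every l with m < l ≤ n, the determinant of W_{l,l}(U₁,…,U_N) vanishes identically: det W_{l,l}(U₁,…,U_N) = 0. -/

import Mathlib

open Matrix

noncomputable section

namespace SingularDarboux

variable {n : ℕ}

/-- Entrywise derivative `∂` of a matrix-valued function. -/
def matD (U : ℝ → Matrix (Fin n) (Fin n) ℝ) : ℝ → Matrix (Fin n) (Fin n) ℝ :=
  fun x => Matrix.of fun i j => deriv (fun t => U t i j) x

/-- The operator `D_m` acting on matrix-valued functions: it differentiates the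
first `m` rows and keeps the remaining rows unchanged. -/
def matDm (m : ℕ) (U : ℝ → Matrix (Fin n) (Fin n) ℝ) : ℝ → Matrix (Fin n) (Fin n) ℝ :=
  fun x => Matrix.of fun i j => if (i : ℕ) < m then deriv (fun t => U t i j) x else U x i j

/-- Entrywise derivative `∂` of a vector-valued function. -/
def vecD (Ψ : ℝ → Fin n → ℝ) : ℝ → Fin n → ℝ := fun x i => deriv (fun t => Ψ t i) x

/-- The operator `D_m` (equivalently `∂^{(m)}`) acting on vector-valued functions:
it differentiates the first `m` components and keeps the remaining ones unchanged. -/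
def vecDm (m : ℕ) (Ψ : ℝ → Fin n → ℝ) : ℝ → Fin n → ℝ :=
  fun x i => if (i : ℕ) < m then deriv (fun t => Ψ t i) x else Ψ x i

/-- All entries of the matrix-valued function are smooth. -/
def SmoothMat (U : ℝ → Matrix (Fin n) (Fin n) ℝ) : Prop :=
  ∀ i j, ContDiff ℝ (⊤ : ℕ∞) fun x => U x i j

/-- All components of the vector-valued function are smooth. -/
def SmoothVec (Ψ : ℝ → Fin n → ℝ) : Prop := ∀ i, ContDiff ℝ (⊤ : ℕ∞) fun x => Ψ x i

/-- `U = diag(Ũ, I_{n-m})`: outside of the top-left `m × m` block, `U` coincides with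
the identity matrix. -/
def BlockDiag (m : ℕ) (U : ℝ → Matrix (Fin n) (Fin n) ℝ) : Prop :=
  ∀ (x : ℝ) (i j : Fin n), (m ≤ (i : ℕ) ∨ m ≤ (j : ℕ)) → U x i j = if i = j then 1 else 0

/-- The `(r,k)` block (`r,k` $0$-indexed) of the matrix `W(U₁,…,U_M;U_{M+1},…,U_N)`. -/
def Wblock (m M r k : ℕ) (U : ℝ → Matrix (Fin n) (Fin n) ℝ) : ℝ → Matrix (Fin n) (Fin n) ℝ :=
  if k < M then (if r ≤ k then (matDm m)^[r] U else matD^[r] U)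
  else (if r < M then (matDm m)^[r] U else matD^[r - M] ((matDm m)^[M] U))

/-- The `r`-th block of the column appended on the right in `W_j`. -/
def Wcol (m M r : ℕ) (Ψ : ℝ → Fin n → ℝ) : ℝ → Fin n → ℝ :=
  if r < M then (vecDm m)^[r] Ψ else vecD^[r - M] ((vecDm m)^[M] Ψ)

/-- The `i`-th row of the `k`-th block of the row appended at the bottom in `W_j`
(also the replacement row used in `W_{i,j}`). -/
def Wrow (m M N k : ℕ) (U : ℝ → Matrix (Fin n) (Fin n) ℝ) (i : Fin n) : ℝ → Fin n → ℝ :=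
  if k < M then (fun x => matD^[N] U x i) else (fun x => matD^[N - M] ((matDm m)^[M] U) x i)

/-- The `nN × nN` matrix `W(U₁,…,U_M;U_{M+1},…,U_N)`; rows are indexed by pairs
(block-row `r`, row `i` within the block) and similarly for columns. -/
def Wmat (m M N : ℕ) (U : ℕ → ℝ → Matrix (Fin n) (Fin n) ℝ) (x : ℝ) :
    Matrix (Fin N × Fin n) (Fin N × Fin n) ℝ :=
  Matrix.of fun p q => Wblock m M (p.1 : ℕ) (q.1 : ℕ) (U (q.1 : ℕ)) x p.2 q.2

/-- The `(nN+1) × (nN+1)` matrix `W_j(U₁,…,U_M;U_{M+1},…,U_N,Ψ)`. -/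
def WjMat (m M N : ℕ) (j : Fin n) (U : ℕ → ℝ → Matrix (Fin n) (Fin n) ℝ)
    (Ψ : ℝ → Fin n → ℝ) (x : ℝ) :
    Matrix ((Fin N × Fin n) ⊕ Unit) ((Fin N × Fin n) ⊕ Unit) ℝ :=
  Matrix.of fun p q =>
    match p, q with
    | Sum.inl p, Sum.inl q => Wblock m M (p.1 : ℕ) (q.1 : ℕ) (U (q.1 : ℕ)) x p.2 q.2
    | Sum.inl p, Sum.inr _ => Wcol m M (p.1 : ℕ) Ψ x p.2
    | Sum.inr _, Sum.inl q => Wrow m M N (q.1 : ℕ) (U (q.1 : ℕ)) j x q.2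
    | Sum.inr _, Sum.inr _ => vecD^[N - M] ((vecDm m)^[M] Ψ) x j

/-- The `nN × nN` matrix `W_{i,j}(U₁,…,U_M;U_{M+1},…,U_N)`: in the last block-row
(`r = N-1`) of `W` the `j`-th row of each block is replaced as prescribed. -/
def WijMat (m M N : ℕ) (i j : Fin n) (U : ℕ → ℝ → Matrix (Fin n) (Fin n) ℝ) (x : ℝ) :
    Matrix (Fin N × Fin n) (Fin N × Fin n) ℝ :=
  Matrix.of fun p q =>
    if (p.1 : ℕ) = N - 1 ∧ p.2 = j then Wrow m M N (q.1 : ℕ) (U (q.1 : ℕ)) i x q.2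
    else Wblock m M (p.1 : ℕ) (q.1 : ℕ) (U (q.1 : ℕ)) x p.2 q.2


theorem matD_iterate_apply (U : ℝ → Matrix (Fin n) (Fin n) ℝ) (r : ℕ) (x : ℝ) (i j : Fin n) :
    matD^[r] U x i j = iteratedDeriv r (fun t => U t i j) x := by
  induction r generalizing x with
  | zero => rw [Function.iterate_zero_apply, iteratedDeriv_zero]
  | succ r ih =>
    rw [Function.iterate_succ_apply', iteratedDeriv_succ, ← funext ih]
    rfl

theorem BlockDiag.row_eq_one_row {m : ℕ} {U : ℝ → Matrix (Fin n) (Fin n) ℝ} (hU : BlockDiag m U)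
    {i : Fin n} (hi : m ≤ (i : ℕ)) (x : ℝ) : U x i = (1 : Matrix (Fin n) (Fin n) ℝ) i := by
  funext j
  rw [hU x i j (Or.inl hi), Matrix.one_apply]

section ConstantRow

variable {U : ℝ → Matrix (Fin n) (Fin n) ℝ} {i : Fin n}

theorem matD_iterate_row_eq_zero {c : Fin n → ℝ} (hU : ∀ x, U x i = c) {r : ℕ} (hr : r ≠ 0)
    (x : ℝ) : matD^[r] U x i = 0 := by
  funext j
  simp only [matD_iterate_apply, hU, iteratedDeriv_const, if_neg hr, Pi.zero_apply]

theorem matDm_row_of_lt {m : ℕ} (hi : (i : ℕ) < m) (x : ℝ) : matDm m U x i = matD U x i :=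
  funext fun _ => if_pos hi

theorem matDm_row_of_le {m : ℕ} (hi : m ≤ (i : ℕ)) (x : ℝ) : matDm m U x i = U x i :=
  funext fun _ => if_neg hi.not_gt

theorem exists_matDm_iterate_row_eq (m : ℕ) (hU : ∃ c, ∀ x, U x i = c) (r : ℕ) :
    ∃ c, ∀ x, (matDm m)^[r] U x i = c := by
  induction r with
  | zero => exact hU
  | succ r ih =>
    obtain ⟨c, hc⟩ := ih
    simp only [Function.iterate_succ_apply']
    rcases lt_or_ge (i : ℕ) m with hi | hi
    · exact ⟨0, fun x =>
        (matDm_row_of_lt hi x).trans (matD_iterate_row_eq_zero hc one_ne_zero x)⟩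
    · exact ⟨c, fun x => (matDm_row_of_le hi x).trans (hc x)⟩

theorem Wrow_eq_zero (m M : ℕ) {N k : ℕ} (hk : k < N) (hU : ∃ c, ∀ x, U x i = c) (x : ℝ) :
    Wrow m M N k U i x = 0 := by
  unfold Wrow
  split_ifs with hkM
  · obtain ⟨c, hc⟩ := hU
    exact matD_iterate_row_eq_zero hc (Nat.ne_zero_of_lt hk) x
  · obtain ⟨c, hc⟩ := exists_matDm_iterate_row_eq m hU M
    have hMN : N - M ≠ 0 := by omega
    exact matD_iterate_row_eq_zero hc hMN x

end ConstantRow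

theorem WijMat_replaced_row (m M : ℕ) {N : ℕ} (hN : N - 1 < N) (i j : Fin n)
    (U : ℕ → ℝ → Matrix (Fin n) (Fin n) ℝ) (x : ℝ) (q : Fin N × Fin n) :
    WijMat m M N i j U x (⟨N - 1, hN⟩, j) q = Wrow m M N q.1 (U q.1) i x q.2 :=
  if_pos ⟨rfl, rfl⟩

theorem det_Wll_vanishes_general (m M : ℕ) {N : ℕ} (hN : 1 ≤ N) (i j : Fin n)
    (U : ℕ → ℝ → Matrix (Fin n) (Fin n) ℝ) (hU : ∀ k < N, ∃ c, ∀ x, U k x i = c) (x : ℝ) :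
    (WijMat m M N i j U x).det = 0 := by
  refine Matrix.det_eq_zero_of_row_eq_zero (⟨N - 1, Nat.sub_one_lt_of_le hN le_rfl⟩, j) ?_
  intro q
  rw [WijMat_replaced_row, Wrow_eq_zero m M q.1.isLt (hU q.1 q.1.isLt), Pi.zero_apply]

/-- For a purely singular chain (`M = N`) and `m < l ≤ n` (1-indexed, i.e.
`m ≤ l` for the 0-indexed `l : Fin n`), the determinant of
`W_{l,l}(U₁,…,U_N)` vanishes identically. -/
theorem det_Wll_vanishes {n : ℕ} (m N : ℕ) (hm : 1 ≤ m) (hmn : m < n) (hN : 1 ≤ N)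
    (U : ℕ → ℝ → Matrix (Fin n) (Fin n) ℝ)
    (hUsmooth : ∀ k < N, SmoothMat (U k)) (hUblk : ∀ k < N, BlockDiag m (U k)) :
    ∀ l : Fin n, m ≤ (l : ℕ) → ∀ x : ℝ, (WijMat m N N l l U x).det = 0 := by
  intro l hl x
  exact det_Wll_vanishes_general m N hN l l U
    (fun k hk => ⟨_, (hUblk k hk).row_eq_one_row hl⟩) x

end SingularDarboux
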